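/- Let q > 1 be a real number, λ a real number, r and s natural numbers, and ρ_0, …, ρ_r real numbers (with ρ_i = 0 for i > r). Then Σ_{u=0}^{r+s} Σ_{i=0}^{u} q^{2is} ρ_i [s; u−i] γ(λ−2i, u−i) = q^{λs} · Σ_{i=0}^{r} ρ_i. (This says that the skew-q-product of any homogeneous polynomial ρ of degree r with μ^{[s]}, whose coefficients are [s;k]γ(λ,k), evaluated at X = Y = 1 and parameter λ, equals q^{λs} times ρ evaluated at X = Y = 1.) -/

import Mathlib

/-- The skew-q-nary Gaussian coefficient `[x;k]` for real `x`. -/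
noncomputable def gaussQ (q x : ℝ) (k : ℕ) : ℝ :=
  ∏ i ∈ Finset.range k, (q ^ (2 * x) - q ^ (2 * (i : ℝ))) / (q ^ (2 * (k : ℝ)) - q ^ (2 * (i : ℝ)))

/-- The skew-q-nary Gamma function `γ(x,k)`. -/
noncomputable def skewGamma (q x : ℝ) (k : ℕ) : ℝ :=
  ∏ i ∈ Finset.range k, (q ^ x - q ^ (2 * (i : ℝ)))

/-!
Put `b = q ^ 2` and `P k x = ∏ i < k, (x - b ^ i)`. In terms of `P`, the Gaussian coefficient
`[s;k]` is `P k (b ^ s) / P k (b ^ k)` and `γ(λ,k)` is `P k (q ^ λ)`, so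
`∑ k, [s;k] γ(λ,k) = (q ^ λ) ^ s` is the Newton interpolation of `X ^ s` at the nodes `b ^ i`; it
follows from the Pascal recurrence and `x * P k x = P (k + 1) x + b ^ k * P k x`. In the double sum,
the terms with a fixed `i` therefore add up to `ρ i * q ^ (2 * i * s) * (q ^ (λ - 2 * i)) ^ s`, in
which the powers of `q ^ i` cancel.
-/

open Finset

theorem ne_zero_of_injective_pow {M : Type*} [MonoidWithZero M] {b : M}
    (hb : Function.Injective (b ^ · : ℕ → M)) : b ≠ 0 := by
  rintro rfl
  exact hb.ne (show 1 ≠ 2 by decide) (by simp)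

section CommRing

variable {R : Type*} [CommRing R]

/-- The Newton basis product at the nodes `b ^ i`, a `q`-analogue of the falling factorial. With
`b = q ^ 2` and `x = q ^ λ` it is `γ(λ,k)`. -/
def qFalling (b x : R) (k : ℕ) : R :=
  ∏ i ∈ range k, (x - b ^ i)

theorem qFalling_zero (b x : R) : qFalling b x 0 = 1 :=
  prod_range_zero _

theorem qFalling_succ (b x : R) (k : ℕ) :
    qFalling b x (k + 1) = qFalling b x k * (x - b ^ k) :=
  prod_range_succ _ k

theorem qFalling_mul_succ (b x : R) (k : ℕ) :
    qFalling b (b * x) (k + 1) = (b * x - 1) * b ^ k * qFalling b x k := by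
  have hfactor (i : ℕ) : b * x - b ^ (i + 1) = b * (x - b ^ i) := by ring
  simp only [qFalling, prod_range_succ', hfactor, prod_mul_distrib, prod_const, card_range,
    pow_zero]
  ring

theorem qFalling_pow_eq_zero_of_lt (b : R) {s k : ℕ} (h : s < k) : qFalling b (b ^ s) k = 0 :=
  prod_eq_zero (mem_range.2 h) (sub_self _)

end CommRing

section Field

variable {K : Type*} [Field K]

/-- The Gaussian coefficient with base `b`, as a function of the power `y` of `b` that stands for
its upper argument: with `b = q ^ 2` and `y = q ^ (2 * x)` it is `[x;k]`, also for `x` not an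
integer. -/
def qBinom (b y : K) (k : ℕ) : K :=
  qFalling b y k / qFalling b (b ^ k) k

theorem qBinom_zero (b y : K) : qBinom b y 0 = 1 := by
  rw [qBinom, qFalling_zero, qFalling_zero, div_one]

theorem qBinom_pow_eq_zero_of_lt (b : K) {s k : ℕ} (h : s < k) : qBinom b (b ^ s) k = 0 := by
  rw [qBinom, qFalling_pow_eq_zero_of_lt b h, zero_div]

theorem qBinom_mul_succ {b : K} {k : ℕ} (hb : b ≠ 0) (hk : b ^ (k + 1) ≠ 1) (y : K) :
    qBinom b (b * y) (k + 1) = qBinom b y k + b ^ (k + 1) * qBinom b y (k + 1) := by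
  have hk' : b * b ^ k - 1 ≠ 0 := sub_ne_zero.2 (pow_succ' b k ▸ hk)
  simp only [qBinom, pow_succ' b k, qFalling_mul_succ]
  rw [qFalling_succ]
  field_simp
  ring

theorem sum_qBinom_pow_succ_mul_qFalling {b : K} (hb : Function.Injective (b ^ · : ℕ → K)) (x : K)
    {s m : ℕ} (hm : s < m) :
    ∑ k ∈ range (m + 1), qBinom b (b ^ (s + 1)) k * qFalling b x k
      = x * ∑ k ∈ range m, qBinom b (b ^ s) k * qFalling b x k := by
  have hb0 : b ≠ 0 := ne_zero_of_injective_pow hb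
  have hb1 (k : ℕ) : b ^ (k + 1) ≠ 1 := by
    simpa only [pow_zero] using hb.ne k.succ_ne_zero
  have hshift : ∑ k ∈ range m, b ^ (k + 1) * qBinom b (b ^ s) (k + 1) * qFalling b x (k + 1) + 1
      = ∑ k ∈ range m, b ^ k * qBinom b (b ^ s) k * qFalling b x k := by
    have h := sum_range_succ' (fun k => b ^ k * qBinom b (b ^ s) k * qFalling b x k) m
    rw [sum_range_succ, qBinom_pow_eq_zero_of_lt b hm] at h
    simpa only [mul_zero, zero_mul, add_zero, pow_zero, one_mul, qBinom_zero, qFalling_zero]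
      using h.symm
  calc ∑ k ∈ range (m + 1), qBinom b (b ^ (s + 1)) k * qFalling b x k
      = ∑ k ∈ range m, qBinom b (b ^ s) k * qFalling b x (k + 1)
        + (∑ k ∈ range m, b ^ (k + 1) * qBinom b (b ^ s) (k + 1) * qFalling b x (k + 1) + 1) := by
        simp only [sum_range_succ', pow_succ' b s, qBinom_mul_succ hb0 (hb1 _), add_mul,
          sum_add_distrib, qBinom_zero, qFalling_zero, one_mul, add_assoc]
    _ = ∑ k ∈ range m, x * (qBinom b (b ^ s) k * qFalling b x k) := by
        rw [hshift, ← sum_add_distrib]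
        refine sum_congr rfl fun k _ => ?_
        rw [qFalling_succ]
        ring
    _ = x * ∑ k ∈ range m, qBinom b (b ^ s) k * qFalling b x k := (mul_sum ..).symm

theorem sum_qBinom_mul_qFalling {b : K} (hb : Function.Injective (b ^ · : ℕ → K)) (x : K)
    {s n : ℕ} (hn : s < n) :
    ∑ k ∈ range n, qBinom b (b ^ s) k * qFalling b x k = x ^ s := by
  induction s generalizing n with
  | zero =>
    have hvanish (k : ℕ) (hk : k ≠ 0) : qBinom b (b ^ 0) k * qFalling b x k = 0 := by
      rw [qBinom_pow_eq_zero_of_lt b (Nat.pos_of_ne_zero hk), zero_mul]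
    rw [sum_eq_single_of_mem 0 (mem_range.2 hn) fun k _ => hvanish k, qBinom_zero, qFalling_zero,
      one_mul, pow_zero]
  | succ s ih =>
    obtain ⟨m, rfl⟩ : ∃ m, n = m + 1 := ⟨n - 1, by lia⟩
    have hm : s < m := by lia
    rw [sum_qBinom_pow_succ_mul_qFalling hb x hm, ih hm, pow_succ']

theorem sum_sum_qBinom_mul_qFalling {b : K} (hb : Function.Injective (b ^ · : ℕ → K)) (x : K)
    {r : ℕ} (s : ℕ) {ρ : ℕ → K} (hρ : ∀ i, r < i → ρ i = 0) :
    ∑ u ∈ range (r + s + 1), ∑ i ∈ range (u + 1),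
        (b ^ i) ^ s * ρ i * qBinom b (b ^ s) (u - i) * qFalling b (x / b ^ i) (u - i)
      = x ^ s * ∑ i ∈ range (r + 1), ρ i := by
  have hb0 : b ≠ 0 := ne_zero_of_injective_pow hb
  have hrow (i : ℕ) (hi : i ∈ range (r + 1)) :
      ∑ k ∈ range (r + s + 1 - i),
        (b ^ i) ^ s * ρ i * qBinom b (b ^ s) k * qFalling b (x / b ^ i) k = x ^ s * ρ i := by
    have hs : s < r + s + 1 - i := by grind
    simp only [mul_assoc, ← mul_sum]
    rw [sum_qBinom_mul_qFalling hb _ hs, mul_left_comm, ← mul_pow,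
      mul_div_cancel₀ _ (pow_ne_zero i hb0), mul_comm]
  have hzero (i : ℕ) (hi : i ∉ range (r + 1)) :
      ∑ k ∈ range (r + s + 1 - i),
        (b ^ i) ^ s * ρ i * qBinom b (b ^ s) k * qFalling b (x / b ^ i) k = 0 := by
    simp only [hρ i (by grind), mul_zero, zero_mul, sum_const_zero]
  rw [sum_range_diag_flip (r + s + 1) fun i k =>
      (b ^ i) ^ s * ρ i * qBinom b (b ^ s) k * qFalling b (x / b ^ i) k,
    ← sum_subset (range_subset_range.2 (by lia : r + 1 ≤ r + s + 1)) fun i _ => hzero i,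
    sum_congr rfl hrow, mul_sum]

end Field

theorem rpow_two_mul_natCast {q : ℝ} (hq : 0 ≤ q) (n : ℕ) : q ^ (2 * (n : ℝ)) = (q ^ 2) ^ n := by
  rw [Real.rpow_mul_natCast hq, Real.rpow_two]

theorem gaussQ_eq_qBinom {q : ℝ} (hq : 0 ≤ q) (x : ℝ) (k : ℕ) :
    gaussQ q x k = qBinom (q ^ 2) (q ^ (2 * x)) k := by
  simp only [gaussQ, qBinom, qFalling, rpow_two_mul_natCast hq, prod_div_distrib]

theorem skewGamma_eq_qFalling {q : ℝ} (hq : 0 ≤ q) (x : ℝ) (k : ℕ) :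
    skewGamma q x k = qFalling (q ^ 2) (q ^ x) k := by
  simp only [skewGamma, qFalling, rpow_two_mul_natCast hq]

theorem stmt11_general (q : ℝ) (hq : 0 < q) (hq1 : q ≠ 1) (lam : ℝ) (r s : ℕ) (ρ : ℕ → ℝ)
    (hρ : ∀ i, r < i → ρ i = 0) :
    (∑ u ∈ range (r + s + 1), ∑ i ∈ range (u + 1),
        q ^ (2 * i * s) * ρ i * gaussQ q (s : ℝ) (u - i) * skewGamma q (lam - 2 * (i : ℝ)) (u - i))
      = q ^ (lam * (s : ℝ)) * ∑ i ∈ range (r + 1), ρ i := by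
  have hinj : Function.Injective ((q ^ 2) ^ · : ℕ → ℝ) :=
    pow_right_injective₀ (by positivity) fun h => hq1 <|
      (pow_eq_one_iff_of_nonneg hq.le two_ne_zero).1 h
  have hshift (i : ℕ) : q ^ (lam - 2 * (i : ℝ)) = q ^ lam / (q ^ 2) ^ i := by
    rw [Real.rpow_sub hq, rpow_two_mul_natCast hq.le]
  simp only [gaussQ_eq_qBinom hq.le, skewGamma_eq_qFalling hq.le, rpow_two_mul_natCast hq.le,
    hshift, pow_mul, Real.rpow_mul_natCast hq.le]
  exact sum_sum_qBinom_mul_qFalling hinj (q ^ lam) s hρ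

/-- The skew-q-product of any homogeneous polynomial `ρ` of degree `r` with `μ^{[s]}`,
evaluated at `X = Y = 1`, equals `q^{λs}` times `ρ(1,1)`. -/
theorem stmt11 (q : ℝ) (hq : 1 < q) (lam : ℝ) (r s : ℕ) (ρ : ℕ → ℝ)
    (hρ : ∀ i, r < i → ρ i = 0) :
    (∑ u ∈ Finset.range (r + s + 1), ∑ i ∈ Finset.range (u + 1),
        q ^ (2 * i * s) * ρ i * gaussQ q (s : ℝ) (u - i) * skewGamma q (lam - 2 * (i : ℝ)) (u - i))
      = q ^ (lam * (s : ℝ)) * ∑ i ∈ Finset.range (r + 1), ρ i :=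
  stmt11_general q (zero_lt_one.trans hq) hq.ne' lam r s ρ hρ
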